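/- arXiv:2310.12680 — 2 statements merged into one kernel-verified Lean document; each statement's English description precedes it below -/
import Mathlib

section
/- Under the bounded-data assumption, the logistic empirical risk of the multi-head attention model satisfies the self-boundedness property ‖∇L̂(θ̃)‖ ≤ β1(θ̃) · L̂(θ̃) for every θ̃ ∈ R^{H(Td+d²)}, where β1(θ̃) := √T · R · (2R² ‖θ̃‖_{2,∞} + 1). -/
/-!
The gradient norm is the operator norm of the derivative, so it is enough to bound every
directional derivative of `empLoss` at `θ` by `β₁(θ) · empLoss θ · ‖ξ‖`.

* A row of one head is a softmax average `∑ₛ pₛ cₛ`, where `cₛ = ⟨uₜ, xₛ⟩`. Moving the logits in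
  the direction `bₛ = xₜᵀ V xₛ` and the values in the direction `eₛ` gives the derivative
  `Cov_p(b, c) + ∑ₛ pₛ eₛ`, at most `2 max|b| max|c| + max|e|`; Cauchy–Schwarz bounds the three
  maxima by `R² ‖V‖_F`, `R ‖uₜ‖` and `R` times the norm of the `t`-th row of the direction
  (`exists_hasDerivAt_row`).
* Summing over the `T` rows costs a factor `√T` (`exists_hasDerivAt_attnPhi`), and summing over
  the heads costs `√H`, cancelled by the normalisation (`exists_hasDerivAt_mhPhi`). Thus the
  directional derivatives of the multi-head model are at most `β₁(θ) ‖ξ‖`.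
* The logistic loss satisfies `|ℓ'| ≤ ℓ` (`logistic_self_bounded`), so the chain rule turns this
  into the bound for the risk (`exists_hasDerivAt_empLoss`).
-/

open Finset
open scoped RealInnerProductSpace

/-- The softmax map `φ : ℝ^T → ℝ^T`, `φ(v)_t = exp(v_t) / Σ_s exp(v_s)`. -/
noncomputable def smax {T : ℕ} (v : Fin T → ℝ) : Fin T → ℝ :=
  fun t => Real.exp (v t) / ∑ s, Real.exp (v s)

/-- The softmax logits: the `(t, s)` entry of `X W Xᵀ`, i.e. `xₜᵀ W x_s`. -/
noncomputable def attnScores {T d : ℕ} (X : Fin T → Fin d → ℝ)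
    (W : Fin d → Fin d → ℝ) (t : Fin T) : Fin T → ℝ :=
  fun s => ∑ j, ∑ k, X t j * W j k * X s k

/-- The single-head attention model `Φ(X; U, W) = ⟨U, φ(X W Xᵀ) X⟩`. -/
noncomputable def attnPhi {T d : ℕ} (X U : Fin T → Fin d → ℝ)
    (W : Fin d → Fin d → ℝ) : ℝ :=
  ∑ t, ∑ t', smax (attnScores X W t) t' * ∑ j, U t j * X t' j

/-- Index set for the parameters `θ_h = concat(U_h, W_h) ∈ ℝ^{Td + d²}` of one head. -/
abbrev HeadIx (T d : ℕ) := (Fin T × Fin d) ⊕ (Fin d × Fin d)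

/-- Parameter space `ℝ^{H(Td + d²)}` of the `H`-head model, with Euclidean norm. -/
abbrev Params (T d H : ℕ) := EuclideanSpace ℝ (Fin H × HeadIx T d)

/-- The matrix `U_h` of the `h`-th head. -/
noncomputable def headU {T d H : ℕ} (θ : Params T d H) (h : Fin H) :
    Fin T → Fin d → ℝ := fun t j => θ (h, Sum.inl (t, j))

/-- The matrix `W_h` of the `h`-th head. -/
noncomputable def headW {T d H : ℕ} (θ : Params T d H) (h : Fin H) :
    Fin d → Fin d → ℝ := fun j k => θ (h, Sum.inr (j, k))

/-- The multi-head attention model `Φ̃(X; θ̃) = (1/√H) Σ_h Φ(X; U_h, W_h)`. -/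
noncomputable def mhPhi {T d H : ℕ} (X : Fin T → Fin d → ℝ) (θ : Params T d H) : ℝ :=
  (1 / Real.sqrt H) * ∑ h, attnPhi X (headU θ h) (headW θ h)

/-- The logistic empirical risk `L̂(θ̃) = (1/n) Σᵢ log(1 + exp(−yᵢ Φ̃(Xᵢ; θ̃)))`. -/
noncomputable def empLoss {T d H n : ℕ} (X : Fin n → Fin T → Fin d → ℝ)
    (y : Fin n → ℝ) (θ : Params T d H) : ℝ :=
  (1 / (n : ℝ)) * ∑ i, Real.log (1 + Real.exp (-(y i * mhPhi (X i) θ)))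

/-- `‖θ̃‖_{2,∞} = max_h ‖θ_h‖`: the maximum Euclidean norm over heads. -/
noncomputable def maxHeadNorm {T d H : ℕ} (θ : Params T d H) : ℝ :=
  ⨆ h : Fin H, Real.sqrt (∑ p : HeadIx T d, θ (h, p) ^ 2)

/-- Bounded-data assumption: `R ≥ 1`, labels in `{±1}`, and every token has
Euclidean norm at most `R`. -/
def BoundedData {T d n : ℕ} (X : Fin n → Fin T → Fin d → ℝ)
    (y : Fin n → ℝ) (R : ℝ) : Prop :=
  1 ≤ R ∧ (∀ i, y i = 1 ∨ y i = -1) ∧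
    ∀ i t, Real.sqrt (∑ j, X i t j ^ 2) ≤ R

/-- `β₁(θ̃) = √T R (2R² ‖θ̃‖_{2,∞} + 1)`. -/
noncomputable def beta1 {T d H : ℕ} (R : ℝ) (θ : Params T d H) : ℝ :=
  Real.sqrt T * R * (2 * R ^ 2 * maxHeadNorm θ + 1)

/-- `β₃(θ̃) = 2 d √(T d) R³ (3 √d R² ‖θ̃‖_{2,∞} + 1)`. -/
noncomputable def beta3 {T d H : ℕ} (R : ℝ) (θ : Params T d H) : ℝ :=
  2 * (d : ℝ) * Real.sqrt ((T : ℝ) * d) * R ^ 3 *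
    (3 * Real.sqrt d * R ^ 2 * maxHeadNorm θ + 1)

/-- Cauchy–Schwarz for finite sums, with an absolute value on the left. -/
lemma abs_sum_mul_le_sqrt {ι : Type*} [Fintype ι] (f g : ι → ℝ) :
    |∑ i, f i * g i| ≤ Real.sqrt (∑ i, f i ^ 2) * Real.sqrt (∑ i, g i ^ 2) := by
  calc |∑ i, f i * g i| ≤ ∑ i, |f i| * |g i| := by
        simpa only [abs_mul] using Finset.abs_sum_le_sum_abs (fun i => f i * g i) univ
    _ ≤ _ := by
        simpa only [sq_abs] using
          Real.sum_mul_le_sqrt_mul_sqrt univ (fun i => |f i|) (fun i => |g i|)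

lemma sum_le_sqrt_card_mul {N : ℕ} (g : Fin N → ℝ) :
    ∑ i, g i ≤ Real.sqrt N * Real.sqrt (∑ i, g i ^ 2) := by
  simpa using Real.sum_mul_le_sqrt_mul_sqrt univ (fun _ : Fin N => (1 : ℝ)) g

/-- The bilinear form `xᵀ V z` is bounded by `‖x‖ ‖V‖_F ‖z‖`. -/
lemma abs_bilin_le {d : ℕ} (x z : Fin d → ℝ) (V : Fin d → Fin d → ℝ) :
    |∑ j, ∑ k, x j * V j k * z k| ≤
      Real.sqrt (∑ j, x j ^ 2) * (Real.sqrt (∑ j, ∑ k, V j k ^ 2) *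
        Real.sqrt (∑ k, z k ^ 2)) := by
  have h1 : ∑ j, ∑ k, x j * V j k * z k = ∑ j, x j * ∑ k, V j k * z k := by
    simp only [Finset.mul_sum, mul_assoc]
  rw [h1]
  refine (abs_sum_mul_le_sqrt _ _).trans ?_
  gcongr
  rw [← Real.sqrt_mul (by positivity), Finset.sum_mul]
  refine Real.sqrt_le_sqrt (Finset.sum_le_sum fun j _ => ?_)
  exact Finset.sum_mul_sq_le_sq_mul_sq univ (V j) z

lemma smax_nonneg {T : ℕ} (v : Fin T → ℝ) (s : Fin T) : 0 ≤ smax v s := by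
  unfold smax; positivity

lemma sum_exp_pos {T : ℕ} [NeZero T] (v : Fin T → ℝ) : 0 < ∑ s, Real.exp (v s) :=
  Finset.sum_pos (fun _ _ => Real.exp_pos _) univ_nonempty

lemma sum_smax {T : ℕ} [NeZero T] (v : Fin T → ℝ) : ∑ s, smax v s = 1 := by
  unfold smax
  rw [← Finset.sum_div, div_self (sum_exp_pos v).ne']

/-- A softmax average of quantities bounded by `C` is bounded by `C`. -/
lemma abs_sum_smax_mul_le {T : ℕ} [NeZero T] (v f : Fin T → ℝ) {C : ℝ}
    (hf : ∀ s, |f s| ≤ C) : |∑ s, smax v s * f s| ≤ C := by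
  calc |∑ s, smax v s * f s| ≤ ∑ s, |smax v s * f s| := Finset.abs_sum_le_sum_abs _ _
    _ ≤ ∑ s, smax v s * C := by
        refine Finset.sum_le_sum fun s _ => ?_
        rw [abs_mul, abs_of_nonneg (smax_nonneg v s)]
        exact mul_le_mul_of_nonneg_left (hf s) (smax_nonneg v s)
    _ = C := by rw [← Finset.sum_mul, sum_smax, one_mul]

/-- The softmax Jacobian `diag(p) - p pᵀ`, as a derivative along the line `a + τ b`. -/
lemma hasDerivAt_smax {T : ℕ} [NeZero T] (a b : Fin T → ℝ) (s : Fin T) :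
    HasDerivAt (fun τ : ℝ => smax (fun r => a r + τ * b r) s)
      (smax a s * (b s - ∑ r, smax a r * b r)) 0 := by
  have hexp : ∀ r, HasDerivAt (fun τ : ℝ => Real.exp (a r + τ * b r))
      (Real.exp (a r) * b r) 0 := fun r => by
    have := (((hasDerivAt_id (0 : ℝ)).mul_const (b r)).const_add (a r)).exp
    simpa using this
  have hsum : HasDerivAt (fun τ : ℝ => ∑ r, Real.exp (a r + τ * b r))
      (∑ r, Real.exp (a r) * b r) 0 := HasDerivAt.fun_sum fun r _ => hexp r
  have hpos := sum_exp_pos a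
  have hdiv := (hexp s).fun_div hsum (by simpa using hpos.ne')
  unfold smax
  refine hdiv.congr_deriv ?_
  simp only [zero_mul, add_zero, div_mul_eq_mul_div, ← Finset.sum_div]
  field_simp

/-- One row of the attention model along a line. The first part of the derivative is the
covariance under the softmax weights of the logit direction `b` and the values `c`; hence
the factor `2` after bounding it crudely. -/
lemma exists_hasDerivAt_row {T : ℕ} [NeZero T] (a b c e : Fin T → ℝ) {B C E : ℝ}
    (hb : ∀ s, |b s| ≤ B) (hc : ∀ s, |c s| ≤ C) (he : ∀ s, |e s| ≤ E) :
    ∃ D, HasDerivAt (fun τ : ℝ => ∑ s, smax (fun r => a r + τ * b r) s * (c s + τ * e s)) D 0 ∧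
      |D| ≤ 2 * B * C + E := by
  refine ⟨∑ s, smax a s * ((b s - ∑ r, smax a r * b r) * c s + e s), ?_, ?_⟩
  · refine HasDerivAt.fun_sum fun s _ => ?_
    have h2 : HasDerivAt (fun τ : ℝ => c s + τ * e s) (e s) 0 := by
      simpa using ((hasDerivAt_id (0 : ℝ)).mul_const (e s)).const_add (c s)
    refine ((hasDerivAt_smax a b s).fun_mul h2).congr_deriv ?_
    simp only [zero_mul, add_zero]
    ring
  · refine abs_sum_smax_mul_le a _ fun s => ?_
    have hm := abs_sum_smax_mul_le a b hb
    have h1 : |b s - ∑ r, smax a r * b r| ≤ 2 * B := by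
      have := abs_sub (b s) (∑ r, smax a r * b r)
      linarith [hb s]
    have hB : 0 ≤ 2 * B := (abs_nonneg _).trans h1
    calc _ ≤ |(b s - ∑ r, smax a r * b r) * c s| + |e s| := abs_add_le _ _
      _ ≤ 2 * B * C + E := by
        rw [abs_mul]
        exact add_le_add (mul_le_mul h1 (hc s) (abs_nonneg _) hB) (he s)

/-- Directional derivative of a single head at `(U, W)` in the direction `(A, V)`. -/
lemma exists_hasDerivAt_attnPhi {T d : ℕ} (X U A : Fin T → Fin d → ℝ)
    (W V : Fin d → Fin d → ℝ) {R : ℝ} (hR : 0 ≤ R)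
    (hX : ∀ t, Real.sqrt (∑ j, X t j ^ 2) ≤ R) :
    ∃ D, HasDerivAt (fun τ : ℝ => attnPhi X (fun t j => U t j + τ * A t j)
        (fun j k => W j k + τ * V j k)) D 0 ∧
      |D| ≤ Real.sqrt T * R * (2 * R ^ 2 * Real.sqrt (∑ t, ∑ j, U t j ^ 2) *
        Real.sqrt (∑ j, ∑ k, V j k ^ 2) + Real.sqrt (∑ t, ∑ j, A t j ^ 2)) := by
  set v := Real.sqrt (∑ j, ∑ k, V j k ^ 2) with hv
  have hv0 : 0 ≤ v := Real.sqrt_nonneg _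
  have hdot : ∀ (M : Fin T → Fin d → ℝ) (t s : Fin T),
      |∑ j, M t j * X s j| ≤ Real.sqrt (∑ j, M t j ^ 2) * R := fun M t s =>
    (abs_sum_mul_le_sqrt _ _).trans (mul_le_mul_of_nonneg_left (hX s) (Real.sqrt_nonneg _))
  have hrow : ∀ t : Fin T, ∃ D, HasDerivAt (fun τ : ℝ =>
      ∑ s, smax (fun r => attnScores X W t r + τ * attnScores X V t r) s *
        ((∑ j, U t j * X s j) + τ * ∑ j, A t j * X s j)) D 0 ∧
      |D| ≤ 2 * (R * (v * R)) * (Real.sqrt (∑ j, U t j ^ 2) * R)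
        + Real.sqrt (∑ j, A t j ^ 2) * R := fun t => by
    have : NeZero T := ⟨fun h0 => by subst h0; exact t.elim0⟩
    refine exists_hasDerivAt_row _ _ _ _ (fun s => ?_) (hdot U t) (hdot A t)
    refine (abs_bilin_le (X t) (X s) V).trans ?_
    exact mul_le_mul (hX t) (mul_le_mul_of_nonneg_left (hX s) hv0) (by positivity) hR
  choose D hD hDle using hrow
  refine ⟨∑ t, D t, ?_, ?_⟩
  · refine (HasDerivAt.fun_sum fun t (_ : t ∈ univ) => hD t).congr_of_eventuallyEq
      (.of_forall fun τ => ?_)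
    unfold attnPhi
    refine Finset.sum_congr rfl fun t _ => Finset.sum_congr rfl fun s _ => ?_
    congr 1
    · congr 1
      funext r
      simp only [attnScores, Finset.mul_sum, ← Finset.sum_add_distrib]
      refine Finset.sum_congr rfl fun j _ => Finset.sum_congr rfl fun k _ => ?_
      ring
    · simp only [Finset.mul_sum, ← Finset.sum_add_distrib]
      refine Finset.sum_congr rfl fun j _ => ?_
      ring
  · have hfro : ∀ M : Fin T → Fin d → ℝ, ∑ t, Real.sqrt (∑ j, M t j ^ 2) ≤
        Real.sqrt T * Real.sqrt (∑ t, ∑ j, M t j ^ 2) := fun M => by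
      refine (sum_le_sqrt_card_mul _).trans_eq ?_
      congr 2
      exact Finset.sum_congr rfl fun t _ => Real.sq_sqrt (by positivity)
    calc |∑ t, D t| ≤ ∑ t, |D t| := Finset.abs_sum_le_sum_abs _ _
      _ ≤ ∑ t, (2 * (R * (v * R)) * (Real.sqrt (∑ j, U t j ^ 2) * R)
            + Real.sqrt (∑ j, A t j ^ 2) * R) := Finset.sum_le_sum fun t _ => hDle t
      _ = 2 * R ^ 3 * v * ∑ t, Real.sqrt (∑ j, U t j ^ 2)
            + R * ∑ t, Real.sqrt (∑ j, A t j ^ 2) := by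
          rw [Finset.sum_add_distrib, Finset.mul_sum, Finset.mul_sum]
          congr 1 <;> exact Finset.sum_congr rfl fun t _ => by ring
      _ ≤ 2 * R ^ 3 * v * (Real.sqrt T * Real.sqrt (∑ t, ∑ j, U t j ^ 2))
            + R * (Real.sqrt T * Real.sqrt (∑ t, ∑ j, A t j ^ 2)) := by
          gcongr
          · exact hfro U
          · exact hfro A
      _ = _ := by ring

lemma sqrt_head_le_maxHeadNorm {T d H : ℕ} (θ : Params T d H) (h : Fin H) :
    Real.sqrt (∑ p : HeadIx T d, θ (h, p) ^ 2) ≤ maxHeadNorm θ :=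
  le_ciSup (f := fun h : Fin H => Real.sqrt (∑ p : HeadIx T d, θ (h, p) ^ 2))
    (Set.finite_range _).bddAbove h

lemma maxHeadNorm_nonneg {T d H : ℕ} (θ : Params T d H) : 0 ≤ maxHeadNorm θ :=
  Real.iSup_nonneg fun _ => Real.sqrt_nonneg _

lemma beta1_nonneg {T d H : ℕ} {R : ℝ} (hR : 0 ≤ R) (θ : Params T d H) :
    0 ≤ beta1 R θ := by
  have := maxHeadNorm_nonneg θ
  unfold beta1; positivity

lemma sum_headIx {T d H : ℕ} (θ : Params T d H) (h : Fin H) :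
    ∑ p : HeadIx T d, θ (h, p) ^ 2 =
      ∑ t, ∑ j, headU θ h t j ^ 2 + ∑ j, ∑ k, headW θ h j k ^ 2 := by
  simp only [Fintype.sum_sum_type, Fintype.sum_prod_type, headU, headW]

lemma sqrt_headU_le {T d H : ℕ} (θ : Params T d H) (h : Fin H) :
    Real.sqrt (∑ t, ∑ j, headU θ h t j ^ 2) ≤
      Real.sqrt (∑ p : HeadIx T d, θ (h, p) ^ 2) := by
  rw [sum_headIx]
  exact Real.sqrt_le_sqrt (le_add_of_nonneg_right (by positivity))

lemma sqrt_headW_le {T d H : ℕ} (θ : Params T d H) (h : Fin H) :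
    Real.sqrt (∑ j, ∑ k, headW θ h j k ^ 2) ≤
      Real.sqrt (∑ p : HeadIx T d, θ (h, p) ^ 2) := by
  rw [sum_headIx]
  exact Real.sqrt_le_sqrt (le_add_of_nonneg_left (by positivity))

/-- The multi-head model has directional derivatives bounded by `β₁(θ̃) ‖ξ‖`: Cauchy–Schwarz
over the heads costs a factor `√H`, which the normalisation `1/√H` absorbs. -/
lemma exists_hasDerivAt_mhPhi {T d H : ℕ} (X : Fin T → Fin d → ℝ) (θ ξ : Params T d H)
    {R : ℝ} (hR : 0 ≤ R) (hX : ∀ t, Real.sqrt (∑ j, X t j ^ 2) ≤ R) :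
    ∃ D, HasDerivAt (fun τ : ℝ => mhPhi X (θ + τ • ξ)) D 0 ∧ |D| ≤ beta1 R θ * ‖ξ‖ := by
  set q : Fin H → ℝ := fun h => Real.sqrt (∑ p : HeadIx T d, ξ (h, p) ^ 2) with hq
  have hM := maxHeadNorm_nonneg θ
  have hhead : ∀ h : Fin H, ∃ D, HasDerivAt (fun τ : ℝ =>
      attnPhi X (headU (θ + τ • ξ) h) (headW (θ + τ • ξ) h)) D 0 ∧
      |D| ≤ beta1 R θ * q h := fun h => by
    obtain ⟨D, hD, hDle⟩ := exists_hasDerivAt_attnPhi X (headU θ h) (headU ξ h)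
      (headW θ h) (headW ξ h) hR hX
    refine ⟨D, hD, hDle.trans ?_⟩
    have h1 := (sqrt_headU_le θ h).trans (sqrt_head_le_maxHeadNorm θ h)
    have h2 : _ ≤ q h := sqrt_headW_le ξ h
    have h3 : _ ≤ q h := sqrt_headU_le ξ h
    calc _ ≤ Real.sqrt T * R * (2 * R ^ 2 * maxHeadNorm θ * q h + q h) := by gcongr
      _ = _ := by unfold beta1; ring
  choose D hD hDle using hhead
  refine ⟨1 / Real.sqrt H * ∑ h, D h, ?_, ?_⟩
  · exact (HasDerivAt.fun_sum fun h _ => hD h).const_mul _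
  · have hnorm : Real.sqrt (∑ h, q h ^ 2) = ‖ξ‖ := by
      rw [EuclideanSpace.norm_eq, Fintype.sum_prod_type]
      congr 1
      refine Finset.sum_congr rfl fun h _ => ?_
      rw [hq]
      simp only [Real.norm_eq_abs, sq_abs]
      exact Real.sq_sqrt (by positivity)
    have hβ := beta1_nonneg hR θ
    -- only `≤` holds in general: for `H = 0` the left side is the junk value `0`
    have hH : 1 / Real.sqrt H * Real.sqrt H ≤ 1 := by
      rw [one_div]; exact inv_mul_le_one
    calc |1 / Real.sqrt H * ∑ h, D h| = 1 / Real.sqrt H * |∑ h, D h| := by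
          rw [abs_mul, abs_of_nonneg (by positivity)]
      _ ≤ 1 / Real.sqrt H * ∑ h, beta1 R θ * q h := by
          gcongr
          exact (Finset.abs_sum_le_sum_abs _ _).trans (Finset.sum_le_sum fun h _ => hDle h)
      _ ≤ 1 / Real.sqrt H * (beta1 R θ * (Real.sqrt H * ‖ξ‖)) := by
          rw [← Finset.mul_sum, ← hnorm]
          gcongr
          exact sum_le_sqrt_card_mul q
      _ = 1 / Real.sqrt H * Real.sqrt H * (beta1 R θ * ‖ξ‖) := by ring
      _ ≤ beta1 R θ * ‖ξ‖ := mul_le_of_le_one_left (by positivity) hH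

/-- Self-boundedness of the logistic loss `ℓ(z) = log(1 + e⁻ᶻ)`, namely `|ℓ'| ≤ ℓ`. -/
lemma logistic_self_bounded (z : ℝ) :
    Real.exp (-z) / (1 + Real.exp (-z)) ≤ Real.log (1 + Real.exp (-z)) := by
  have hpos : 0 < 1 + Real.exp (-z) := by positivity
  have h := Real.one_sub_inv_le_log_of_pos hpos
  have : Real.exp (-z) / (1 + Real.exp (-z)) = 1 - (1 + Real.exp (-z))⁻¹ := by
    field_simp; ring
  linarith

lemma empLoss_nonneg {T d H n : ℕ} (X : Fin n → Fin T → Fin d → ℝ) (y : Fin n → ℝ)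
    (θ : Params T d H) : 0 ≤ empLoss X y θ := by
  unfold empLoss
  refine mul_nonneg (by positivity) (Finset.sum_nonneg fun i _ => Real.log_nonneg ?_)
  linarith [Real.exp_pos (-(y i * mhPhi (X i) θ))]

lemma exists_hasDerivAt_empLoss {T d H n : ℕ} (X : Fin n → Fin T → Fin d → ℝ)
    (y : Fin n → ℝ) {R : ℝ} (hdata : BoundedData X y R) (θ ξ : Params T d H) :
    ∃ D, HasDerivAt (fun τ : ℝ => empLoss X y (θ + τ • ξ)) D 0 ∧
      |D| ≤ beta1 R θ * empLoss X y θ * ‖ξ‖ := by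
  obtain ⟨hR1, hy, hX⟩ := hdata
  have hR : 0 ≤ R := by linarith
  have hβ := beta1_nonneg hR θ
  choose D hD hDle using fun i => exists_hasDerivAt_mhPhi (X i) θ ξ hR (hX i)
  set z : Fin n → ℝ := fun i => y i * mhPhi (X i) θ with hz
  have hsample : ∀ i, HasDerivAt (fun τ : ℝ =>
      Real.log (1 + Real.exp (-(y i * mhPhi (X i) (θ + τ • ξ)))))
      (Real.exp (-z i) * -(y i * D i) / (1 + Real.exp (-z i))) 0 := fun i => by
    have h0 : 0 < 1 + Real.exp (-(y i * mhPhi (X i) (θ + (0 : ℝ) • ξ))) := by positivity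
    have := ((((hD i).const_mul (y i)).fun_neg).exp.const_add 1).log h0.ne'
    simpa [hz] using this
  refine ⟨_, (HasDerivAt.fun_sum fun i _ => hsample i).const_mul (1 / (n : ℝ)), ?_⟩
  have hle : ∀ i, |Real.exp (-z i) * -(y i * D i) / (1 + Real.exp (-z i))| ≤
      Real.log (1 + Real.exp (-z i)) * (beta1 R θ * ‖ξ‖) := fun i => by
    have hyi : |y i| = 1 := by rcases hy i with h | h <;> simp [h]
    have hpos : 0 < 1 + Real.exp (-z i) := by positivity
    rw [mul_div_right_comm, abs_mul, abs_neg, abs_mul, hyi, one_mul,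
      abs_of_nonneg (by positivity)]
    have hl := logistic_self_bounded (z i)
    exact mul_le_mul hl (hDle i) (abs_nonneg _) (le_trans (by positivity) hl)
  rw [abs_mul, abs_of_nonneg (by positivity : (0 : ℝ) ≤ 1 / n)]
  calc _ ≤ 1 / (n : ℝ) * ∑ i, Real.log (1 + Real.exp (-z i)) * (beta1 R θ * ‖ξ‖) := by
        gcongr
        exact (Finset.abs_sum_le_sum_abs _ _).trans (Finset.sum_le_sum fun i _ => hle i)
    _ = _ := by
        rw [← Finset.sum_mul]
        unfold empLoss
        ring

/-- Self-boundedness of the logistic empirical risk of the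
multi-head attention model: under the bounded-data assumption,
`‖∇L̂(θ̃)‖ ≤ β₁(θ̃) · L̂(θ̃)` for every `θ̃ ∈ ℝ^{H(Td+d²)}`, where
`β₁(θ̃) = √T R (2R² ‖θ̃‖_{2,∞} + 1)`. -/
theorem empirical_risk_self_bounded {T d H n : ℕ} (hn : 0 < n)
    (X : Fin n → Fin T → Fin d → ℝ) (y : Fin n → ℝ) (R : ℝ)
    (hdata : BoundedData X y R) :
    ∀ θ : Params T d H,
      ‖gradient (empLoss X y) θ‖ ≤ beta1 R θ * empLoss X y θ := by
  intro θ
  have hC : 0 ≤ beta1 R θ * empLoss X y θ :=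
    mul_nonneg (beta1_nonneg (by linarith [hdata.1]) θ) (empLoss_nonneg X y θ)
  rw [gradient, LinearIsometryEquiv.norm_map]
  by_cases hf : DifferentiableAt ℝ (empLoss X y) θ
  · refine ContinuousLinearMap.opNorm_le_bound _ hC fun ξ => ?_
    obtain ⟨D, hD, hDle⟩ := exists_hasDerivAt_empLoss X y hdata θ ξ
    have hline : HasLineDerivAt ℝ (empLoss X y) D θ ξ := hD
    rw [← hf.lineDeriv_eq_fderiv, hline.lineDeriv, Real.norm_eq_abs]
    exact hDle
  -- `fderiv` is `0` at a point of non-differentiability, so this case needs no further argument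
  · rw [fderiv_zero_of_not_differentiableAt hf, norm_zero]
    exact hC
end

section
/- Under the bounded-data assumption, the logistic empirical risk of the multi-head attention model satisfies a self-bounded weak-convexity property: for every θ̃ ∈ R^{H(Td+d²)}, the minimum eigenvalue of the Hessian satisfies λ_min(∇²L̂(θ̃)) ≥ −(β3(θ̃)/√H) · L̂(θ̃), where β3(θ̃) := 2 d √(T d) · R³ · (3 √d · R² ‖θ̃‖_{2,∞} + 1). -/
/-!
Along a line `s ↦ θ + s v` the loss of one sample is `ℓ(g(s))` with `ℓ(x) = log(1 + exp(-x))` and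
`g(s) = y Φ̃(X; θ + s v)`, so its second derivative is `ℓ''(g) g'² + ℓ'(g) g''`. The first term is
nonnegative, and `|ℓ'| ≤ ℓ` (`logistic_second_deriv`), so it is enough to bound `|g''(0)|` by
`(β₃ / √H) ‖v‖²`.

The function `g` is a sum over heads and tokens `t` of softmax averages `E_s[a + s b]`, whose
logits `z + s w` are affine in `s`. Differentiating an average yields averages and products of
averages (`hasDerivAt_savg`): `(E_s[q_s])' = E_s[q_s'] + E_s[w q_s] - E_s[w] E_s[q_s]`. Doing this
twice and bounding every average by a supremum gives
`|(E_s[a + s b])''(0)| ≤ 4 ‖w‖_∞ ‖b‖_∞ + 6 ‖w‖_∞² ‖a‖_∞` (`savg_second_deriv`). Cauchy–Schwarz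
bounds `‖w‖_∞ ≤ R² ‖B‖`, `‖b‖_∞ ≤ R ‖A_t‖`, `‖a‖_∞ ≤ R ‖U_t‖`, where `(A, B)` are the blocks of
`v` for that head, and `∑_t ‖A_t‖ ≤ √T ‖A‖` sums the token bounds into the head bound
`2 √T R³ (3 R² ‖θ_h‖ + 1) ‖v_h‖²` (`head_second_deriv`).
-/


open Finset
open scoped RealInnerProductSpace

/-- `f` is differentiable on `ℝ` and its derivative has derivative `c` at `0`. -/
def HasSecondDeriv (f : ℝ → ℝ) (c : ℝ) : Prop :=
  ∃ f' : ℝ → ℝ, (∀ s, HasDerivAt f (f' s) s) ∧ HasDerivAt f' c 0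

lemma HasSecondDeriv.const_mul {f : ℝ → ℝ} {c : ℝ} (k : ℝ) (hf : HasSecondDeriv f c) :
    HasSecondDeriv (fun s => k * f s) (k * c) := by
  obtain ⟨f', h1, h2⟩ := hf
  exact ⟨fun s => k * f' s, fun s => (h1 s).const_mul k, h2.const_mul k⟩

lemma HasSecondDeriv.sum {ι : Type*} (S : Finset ι) {f : ι → ℝ → ℝ} {c : ι → ℝ}
    (hf : ∀ i ∈ S, HasSecondDeriv (f i) (c i)) :
    HasSecondDeriv (fun s => ∑ i ∈ S, f i s) (∑ i ∈ S, c i) := by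
  classical
  choose! f' h1 h2 using hf
  exact ⟨fun s => ∑ i ∈ S, f' i s, fun s => HasDerivAt.fun_sum fun i hi => h1 i hi s,
    HasDerivAt.fun_sum fun i hi => h2 i hi⟩

lemma HasSecondDeriv.iteratedDeriv_two {f : ℝ → ℝ} {c : ℝ} (hf : HasSecondDeriv f c) :
    iteratedDeriv 2 f 0 = c := by
  obtain ⟨f', h1, h2⟩ := hf
  have : deriv f = f' := funext fun s => (h1 s).deriv
  rw [iteratedDeriv_succ, iteratedDeriv_one, this]
  exact h2.deriv

/-- Second-order chain rule for the logistic loss. The term `ℓ''(g) g'²` is dropped, and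
`-ℓ'(g) = 1 / (1 + exp g) ≤ ℓ(g)`. -/
lemma logistic_second_deriv {g : ℝ → ℝ} {c K : ℝ} (hg : HasSecondDeriv g c) (hc : |c| ≤ K) :
    ∃ e, HasSecondDeriv (fun s => Real.log (1 + Real.exp (-g s))) e ∧
      -K * Real.log (1 + Real.exp (-g 0)) ≤ e := by
  obtain ⟨g', h1, h2⟩ := hg
  have hpos : ∀ x : ℝ, 0 < 1 + Real.exp x := fun x => by positivity
  refine ⟨-((c * (1 + Real.exp (g 0)) - g' 0 * (Real.exp (g 0) * g' 0)) /
    (1 + Real.exp (g 0)) ^ 2),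
    ⟨fun s => -(g' s / (1 + Real.exp (g s))), fun s => ?_, ?_⟩, ?_⟩
  · have : HasDerivAt (fun r => Real.log (1 + Real.exp (-g r)))
        (Real.exp (-g s) * -g' s / (1 + Real.exp (-g s))) s :=
      (((h1 s).fun_neg.exp).const_add 1).log (hpos _).ne'
    refine this.congr_deriv ?_
    have hne := (hpos (g s)).ne'
    have he : Real.exp (g s) ≠ 0 := (Real.exp_pos _).ne'
    rw [Real.exp_neg]
    have h3 : 1 + (Real.exp (g s))⁻¹ ≠ 0 := by positivity
    field_simp
    ring
  · exact (h2.div (((h1 0).exp).const_add 1) (hpos _).ne').neg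
  · have hlog : 1 / (1 + Real.exp (g 0)) ≤ Real.log (1 + Real.exp (-g 0)) := by
      have h := Real.one_sub_inv_le_log_of_pos (hpos (-g 0))
      refine le_trans (le_of_eq ?_) h
      have he : Real.exp (g 0) ≠ 0 := (Real.exp_pos _).ne'
      have hne := (hpos (g 0)).ne'
      rw [Real.exp_neg]
      have h3 : 1 + (Real.exp (g 0))⁻¹ ≠ 0 := by positivity
      field_simp
      ring
    have hK : 0 ≤ K := (abs_nonneg c).trans hc
    have hsplit : -((c * (1 + Real.exp (g 0)) - g' 0 * (Real.exp (g 0) * g' 0)) /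
        (1 + Real.exp (g 0)) ^ 2) =
        Real.exp (g 0) * g' 0 ^ 2 / (1 + Real.exp (g 0)) ^ 2 - c * (1 / (1 + Real.exp (g 0))) := by
      have hne := (hpos (g 0)).ne'
      field_simp
      ring
    rw [hsplit]
    have h4 : 0 ≤ Real.exp (g 0) * g' 0 ^ 2 / (1 + Real.exp (g 0)) ^ 2 := by positivity
    have h5 : c * (1 / (1 + Real.exp (g 0))) ≤ K * (1 / (1 + Real.exp (g 0))) :=
      mul_le_mul_of_nonneg_right ((le_abs_self c).trans hc) (by positivity)
    have h6 := mul_le_mul_of_nonneg_left hlog hK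
    linarith

/-! ### Softmax averages -/

/-- The average of `q` under the softmax distribution with logits `z + s w`. -/
noncomputable def savg {T : ℕ} (z w : Fin T → ℝ) (s : ℝ) (q : Fin T → ℝ) : ℝ :=
  ∑ t, smax (fun u => z u + s * w u) t * q t

lemma abs_savg_le {T : ℕ} (z w : Fin T → ℝ) (s : ℝ) (q : Fin T → ℝ) {C : ℝ} (hC : 0 ≤ C)
    (hq : ∀ t, |q t| ≤ C) : |savg z w s q| ≤ C := by
  unfold savg smax
  set D := ∑ u, Real.exp (z u + s * w u) with hD
  have hD0 : 0 ≤ D := Finset.sum_nonneg fun _ _ => (Real.exp_pos _).le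
  calc |∑ t, Real.exp (z t + s * w t) / D * q t|
      ≤ ∑ t, |Real.exp (z t + s * w t) / D * q t| := Finset.abs_sum_le_sum_abs _ _
    _ ≤ ∑ t, Real.exp (z t + s * w t) / D * C := by
        refine Finset.sum_le_sum fun t _ => ?_
        have : 0 ≤ Real.exp (z t + s * w t) / D := by positivity
        rw [abs_mul, abs_of_nonneg this]
        exact mul_le_mul_of_nonneg_left (hq t) this
    _ = D / D * C := by rw [← Finset.sum_mul, ← Finset.sum_div]
    _ ≤ 1 * C := mul_le_mul_of_nonneg_right (div_self_le_one D) hC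
    _ = C := one_mul C

lemma hasDerivAt_savg {T : ℕ} (z w : Fin T → ℝ) (q : ℝ → Fin T → ℝ) (q' : Fin T → ℝ) (s : ℝ)
    (hq : ∀ t, HasDerivAt (fun r => q r t) (q' t) s) :
    HasDerivAt (fun r => savg z w r (q r))
      (savg z w s q' + savg z w s (fun t => w t * q s t) - savg z w s w * savg z w s (q s)) s := by
  rcases isEmpty_or_nonempty (Fin T) with hT | hT
  · simpa [savg] using hasDerivAt_const s (0 : ℝ)
  have hE : ∀ t, HasDerivAt (fun r => Real.exp (z t + r * w t))
      (Real.exp (z t + s * w t) * w t) s := fun t => by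
    simpa using (((hasDerivAt_id s).mul_const (w t)).const_add (z t)).exp
  have hD : HasDerivAt (fun r => ∑ t, Real.exp (z t + r * w t))
      (∑ t, Real.exp (z t + s * w t) * w t) s := HasDerivAt.fun_sum fun t _ => hE t
  have hN : HasDerivAt (fun r => ∑ t, Real.exp (z t + r * w t) * q r t)
      (∑ t, (Real.exp (z t + s * w t) * w t * q s t + Real.exp (z t + s * w t) * q' t)) s :=
    HasDerivAt.fun_sum fun t _ => (hE t).mul (hq t)
  have hD0 : 0 < ∑ t, Real.exp (z t + s * w t) :=
    Finset.sum_pos (fun _ _ => Real.exp_pos _) Finset.univ_nonempty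
  have hquot : ∀ r (p : Fin T → ℝ), savg z w r p =
      (∑ t, Real.exp (z t + r * w t) * p t) / ∑ t, Real.exp (z t + r * w t) := fun r p => by
    simp only [savg, smax, Finset.sum_div]
    exact Finset.sum_congr rfl fun t _ => by ring
  simp only [hquot]
  refine (hN.fun_div hD hD0.ne').congr_deriv ?_
  rw [Finset.sum_add_distrib]
  simp only [← mul_assoc]
  field_simp
  ring

/-- The second derivative at `0` of a softmax average of an affine function. -/
lemma savg_second_deriv {T : ℕ} (z w a b : Fin T → ℝ) {M A B : ℝ} (hM0 : 0 ≤ M) (hA0 : 0 ≤ A)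
    (hB0 : 0 ≤ B) (hw : ∀ t, |w t| ≤ M) (ha : ∀ t, |a t| ≤ A) (hb : ∀ t, |b t| ≤ B) :
    ∃ c, HasSecondDeriv (fun s => savg z w s (fun t => a t + s * b t)) c ∧
      |c| ≤ 4 * (M * B) + 6 * (M ^ 2 * A) := by
  have hq : ∀ s t, HasDerivAt (fun r => a t + r * b t) (b t) s := fun s t => by
    simpa using ((hasDerivAt_id s).mul_const (b t)).const_add (a t)
  have h1 := fun s => hasDerivAt_savg z w (fun r t => a t + r * b t) b s (hq s)
  have h2 := hasDerivAt_savg z w (fun _ => b) (fun _ => 0) 0 (fun t => hasDerivAt_const _ _)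
  have h3 := hasDerivAt_savg z w (fun r t => w t * (a t + r * b t)) (fun t => w t * b t) 0
    (fun t => (hq 0 t).const_mul (w t))
  have h4 := hasDerivAt_savg z w (fun _ => w) (fun _ => 0) 0 (fun t => hasDerivAt_const _ _)
  refine ⟨_, ⟨_, h1, (h2.add h3).sub (h4.mul (h1 0))⟩, ?_⟩
  simp only [zero_mul, add_zero]
  have hmul : ∀ {p q : Fin T → ℝ} {P Q : ℝ}, 0 ≤ P → (∀ t, |p t| ≤ P) → (∀ t, |q t| ≤ Q) →
      ∀ t, |p t * q t| ≤ P * Q := fun hP hp hq t => by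
    rw [abs_mul]
    exact mul_le_mul (hp t) (hq t) (abs_nonneg _) hP
  have habs : ∀ {x y P Q : ℝ}, |x| ≤ P → |y| ≤ Q → |x * y| ≤ P * Q := fun hx hy => by
    rw [abs_mul]
    exact mul_le_mul hx hy (abs_nonneg _) ((abs_nonneg _).trans hx)
  have e0 : savg z w 0 (fun _ => 0) = 0 := by simp [savg]
  have ew := abs_savg_le z w 0 w hM0 hw
  have ea := abs_savg_le z w 0 a hA0 ha
  have eb := abs_savg_le z w 0 b hB0 hb
  have ewb := abs_savg_le z w 0 (fun t => w t * b t) (mul_nonneg hM0 hB0) (hmul hM0 hw hb)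
  have ewa := abs_savg_le z w 0 (fun t => w t * a t) (mul_nonneg hM0 hA0) (hmul hM0 hw ha)
  have eww := abs_savg_le z w 0 (fun t => w t * w t) (mul_nonneg hM0 hM0) (hmul hM0 hw hw)
  have ewwa := abs_savg_le z w 0 (fun t => w t * (w t * a t))
    (mul_nonneg hM0 (mul_nonneg hM0 hA0)) (hmul hM0 hw (hmul hM0 hw ha))
  rw [e0]
  have p1 := abs_le.mp (habs ew eb)
  have p2 := abs_le.mp (habs ew ewa)
  have p3 := abs_le.mp (habs eww ea)
  have p4 := abs_le.mp (habs (habs ew ew) ea)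
  have p5 := abs_le.mp ewb
  have p6 := abs_le.mp ewwa
  rw [abs_le]
  constructor <;> nlinarith

/-! ### One attention head -/

/-- The Frobenius (Euclidean) norm of a matrix given by its entries. -/
noncomputable def frob {m k : ℕ} (A : Fin m → Fin k → ℝ) : ℝ :=
  Real.sqrt (∑ i, ∑ j, A i j ^ 2)

lemma abs_sum_mul_le {d : ℕ} (u x : Fin d → ℝ) {R : ℝ} (hx : Real.sqrt (∑ j, x j ^ 2) ≤ R) :
    |∑ j, u j * x j| ≤ R * Real.sqrt (∑ j, u j ^ 2) := by
  calc |∑ j, u j * x j| ≤ Real.sqrt ((∑ j, u j ^ 2) * ∑ j, x j ^ 2) :=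
        Real.abs_le_sqrt (Finset.sum_mul_sq_le_sq_mul_sq _ _ _)
    _ = Real.sqrt (∑ j, x j ^ 2) * Real.sqrt (∑ j, u j ^ 2) := by
        rw [Real.sqrt_mul (Finset.sum_nonneg fun _ _ => sq_nonneg _), mul_comm]
    _ ≤ _ := mul_le_mul_of_nonneg_right hx (Real.sqrt_nonneg _)

lemma abs_attnScores_le {T d : ℕ} (X : Fin T → Fin d → ℝ) (B : Fin d → Fin d → ℝ) {R : ℝ}
    (hX : ∀ t, Real.sqrt (∑ j, X t j ^ 2) ≤ R) (t u : Fin T) :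
    |attnScores X B t u| ≤ R ^ 2 * frob B := by
  have hR : 0 ≤ R := (Real.sqrt_nonneg _).trans (hX t)
  have hsq : ∀ t, ∑ j, X t j ^ 2 ≤ R ^ 2 := fun t => (Real.sqrt_le_left hR).mp (hX t)
  have hcs := Finset.sum_mul_sq_le_sq_mul_sq (Finset.univ : Finset (Fin d × Fin d))
    (fun p => X t p.1 * X u p.2) (fun p => B p.1 p.2)
  have e1 : ∑ p : Fin d × Fin d, X t p.1 * X u p.2 * B p.1 p.2 = attnScores X B t u := by
    rw [Fintype.sum_prod_type]
    exact Finset.sum_congr rfl fun j _ => Finset.sum_congr rfl fun k _ => by ring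
  have e2 : ∑ p : Fin d × Fin d, (X t p.1 * X u p.2) ^ 2 =
      (∑ j, X t j ^ 2) * ∑ k, X u k ^ 2 := by
    rw [Fintype.sum_prod_type, Finset.sum_mul_sum]
    exact Finset.sum_congr rfl fun j _ => Finset.sum_congr rfl fun k _ => by ring
  have e3 : ∑ p : Fin d × Fin d, B p.1 p.2 ^ 2 = frob B ^ 2 := by
    rw [Fintype.sum_prod_type, frob,
      Real.sq_sqrt (Finset.sum_nonneg fun _ _ => Finset.sum_nonneg fun _ _ => sq_nonneg _)]
  rw [e1, e2, e3] at hcs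
  refine abs_le_of_sq_le_sq (hcs.trans ?_) (mul_nonneg (sq_nonneg R) (Real.sqrt_nonneg _))
  rw [mul_pow, sq (R ^ 2)]
  exact mul_le_mul_of_nonneg_right
    (mul_le_mul (hsq t) (hsq u) (Finset.sum_nonneg fun _ _ => sq_nonneg _) (sq_nonneg R))
    (sq_nonneg _)

lemma sum_row_norm_le {T d : ℕ} (A : Fin T → Fin d → ℝ) :
    ∑ t, Real.sqrt (∑ j, A t j ^ 2) ≤ Real.sqrt T * frob A := by
  have h := Finset.sum_mul_sq_le_sq_mul_sq (Finset.univ : Finset (Fin T)) (fun _ => (1 : ℝ))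
    (fun t => Real.sqrt (∑ j, A t j ^ 2))
  have e : ∀ t, Real.sqrt (∑ j, A t j ^ 2) ^ 2 = ∑ j, A t j ^ 2 := fun t =>
    Real.sq_sqrt (Finset.sum_nonneg fun _ _ => sq_nonneg _)
  simp only [one_mul, one_pow, Finset.sum_const, Finset.card_univ, Fintype.card_fin,
    nsmul_eq_mul, mul_one, e] at h
  rw [frob, ← Real.sqrt_mul (Nat.cast_nonneg T)]
  exact Real.le_sqrt_of_sq_le h

/-- Second derivative of one attention head along a line in its parameters. -/
lemma head_second_deriv {T d : ℕ} (X U A : Fin T → Fin d → ℝ) (W B : Fin d → Fin d → ℝ) {R : ℝ}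
    (hR : 1 ≤ R) (hX : ∀ t, Real.sqrt (∑ j, X t j ^ 2) ≤ R) :
    ∃ c, HasSecondDeriv (fun s : ℝ => attnPhi X (fun t j => U t j + s * A t j)
        (fun j k => W j k + s * B j k)) c ∧
      |c| ≤ Real.sqrt T * (4 * (R ^ 3 * (frob A * frob B)) +
        6 * (R ^ 5 * (frob U * frob B ^ 2))) := by
  have hR0 : 0 ≤ R := by linarith
  have hB0 : 0 ≤ frob B := Real.sqrt_nonneg _
  choose c hc hcb using fun t => savg_second_deriv (attnScores X W t) (attnScores X B t)
    (fun t' => ∑ j, U t j * X t' j) (fun t' => ∑ j, A t j * X t' j)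
    (mul_nonneg (sq_nonneg R) hB0) (mul_nonneg hR0 (Real.sqrt_nonneg (∑ j, U t j ^ 2)))
    (mul_nonneg hR0 (Real.sqrt_nonneg (∑ j, A t j ^ 2)))
    (abs_attnScores_le X B hX t) (fun t' => abs_sum_mul_le (U t) (X t') (hX t'))
    (fun t' => abs_sum_mul_le (A t) (X t') (hX t'))
  refine ⟨∑ t, c t, ?_, ?_⟩
  · have := HasSecondDeriv.sum Finset.univ fun t _ => hc t
    convert this using 2 with s
    unfold attnPhi savg
    refine Finset.sum_congr rfl fun t _ => Finset.sum_congr rfl fun t' _ => ?_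
    have e1 : attnScores X (fun j k => W j k + s * B j k) t =
        fun u => attnScores X W t u + s * attnScores X B t u := by
      funext u
      simp only [attnScores, Finset.mul_sum, ← Finset.sum_add_distrib]
      exact Finset.sum_congr rfl fun j _ => Finset.sum_congr rfl fun k _ => by ring
    rw [e1]
    congr 1
    simp only [Finset.mul_sum, ← Finset.sum_add_distrib]
    exact Finset.sum_congr rfl fun j _ => by ring
  · have hA := sum_row_norm_le A
    have hU := sum_row_norm_le U
    calc |∑ t, c t| ≤ ∑ t, |c t| := Finset.abs_sum_le_sum_abs _ _
      _ ≤ ∑ t, (4 * (R ^ 2 * frob B * (R * Real.sqrt (∑ j, A t j ^ 2))) +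
          6 * ((R ^ 2 * frob B) ^ 2 * (R * Real.sqrt (∑ j, U t j ^ 2)))) :=
        Finset.sum_le_sum fun t _ => hcb t
      _ = 4 * R ^ 3 * frob B * (∑ t, Real.sqrt (∑ j, A t j ^ 2)) +
          6 * R ^ 5 * frob B ^ 2 * ∑ t, Real.sqrt (∑ j, U t j ^ 2) := by
        rw [Finset.mul_sum, Finset.mul_sum, ← Finset.sum_add_distrib]
        exact Finset.sum_congr rfl fun t _ => by ring
      _ ≤ 4 * R ^ 3 * frob B * (Real.sqrt T * frob A) +
          6 * R ^ 5 * frob B ^ 2 * (Real.sqrt T * frob U) := by gcongr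
      _ = _ := by ring

/-! ### The multi-head model -/

lemma sum_head_sq {T d H : ℕ} (θ : Params T d H) (h : Fin H) :
    ∑ p : HeadIx T d, θ (h, p) ^ 2 = frob (headU θ h) ^ 2 + frob (headW θ h) ^ 2 := by
  rw [Fintype.sum_sum_type, Fintype.sum_prod_type, Fintype.sum_prod_type, frob, frob,
    Real.sq_sqrt (Finset.sum_nonneg fun _ _ => Finset.sum_nonneg fun _ _ => sq_nonneg _),
    Real.sq_sqrt (Finset.sum_nonneg fun _ _ => Finset.sum_nonneg fun _ _ => sq_nonneg _)]
  rfl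

lemma frob_headU_le {T d H : ℕ} (θ : Params T d H) (h : Fin H) :
    frob (headU θ h) ≤ maxHeadNorm θ := by
  have h1 : Real.sqrt (∑ p : HeadIx T d, θ (h, p) ^ 2) ≤ maxHeadNorm θ :=
    le_ciSup (f := fun h : Fin H => Real.sqrt (∑ p : HeadIx T d, θ (h, p) ^ 2))
      (Set.finite_range _).bddAbove h
  refine le_trans (Real.le_sqrt_of_sq_le ?_) h1
  rw [sum_head_sq]
  linarith [sq_nonneg (frob (headW θ h))]

/-- The head bound in terms of `β₃`. The case `d = 0` is separate: there `β₃ = 0`, but the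
parameter space is trivial. -/
lemma head_bound_le_beta3 {T d H : ℕ} {R : ℝ} (hR : 1 ≤ R) (θ v : Params T d H) (h : Fin H) :
    Real.sqrt T * (4 * (R ^ 3 * (frob (headU v h) * frob (headW v h))) +
        6 * (R ^ 5 * (frob (headU θ h) * frob (headW v h) ^ 2))) ≤
      beta3 R θ * ∑ p : HeadIx T d, v (h, p) ^ 2 := by
  rcases Nat.eq_zero_or_pos d with rfl | hd
  · simp [frob]
  have hR0 : 0 ≤ R := by linarith
  have hd1 : (1 : ℝ) ≤ d := by exact_mod_cast hd
  have hsd : 1 ≤ Real.sqrt d := Real.one_le_sqrt.mpr hd1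
  have hN := frob_headU_le θ h
  have hN0 := maxHeadNorm_nonneg θ
  rw [sum_head_sq]
  set a := frob (headU v h)
  set b := frob (headW v h)
  set N := maxHeadNorm θ with hNdef
  have hab : 2 * (a * b) ≤ a ^ 2 + b ^ 2 := by nlinarith [sq_nonneg (a - b)]
  have hbb : b ^ 2 ≤ a ^ 2 + b ^ 2 := by nlinarith [sq_nonneg a]
  calc Real.sqrt T * (4 * (R ^ 3 * (a * b)) + 6 * (R ^ 5 * (frob (headU θ h) * b ^ 2)))
      = Real.sqrt T * (2 * (R ^ 3 * (2 * (a * b))) +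
          6 * (R ^ 5 * (frob (headU θ h) * b ^ 2))) := by ring
    _ ≤ Real.sqrt T * (2 * (R ^ 3 * (a ^ 2 + b ^ 2)) + 6 * (R ^ 5 * (N * (a ^ 2 + b ^ 2)))) := by
        gcongr
    _ = 2 * 1 * (Real.sqrt T * 1) * R ^ 3 * (3 * 1 * R ^ 2 * N + 1) * (a ^ 2 + b ^ 2) := by ring
    _ ≤ 2 * d * (Real.sqrt T * Real.sqrt d) * R ^ 3 * (3 * Real.sqrt d * R ^ 2 * N + 1) *
          (a ^ 2 + b ^ 2) := by gcongr
    _ = beta3 R θ * (a ^ 2 + b ^ 2) := by rw [beta3, Real.sqrt_mul (Nat.cast_nonneg T)]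

lemma mhPhi_second_deriv {T d H : ℕ} (X : Fin T → Fin d → ℝ) {R : ℝ} (hR : 1 ≤ R)
    (hX : ∀ t, Real.sqrt (∑ j, X t j ^ 2) ≤ R) (θ v : Params T d H) :
    ∃ c, HasSecondDeriv (fun s : ℝ => mhPhi X (θ + s • v)) c ∧
      |c| ≤ beta3 R θ / Real.sqrt H * ‖v‖ ^ 2 := by
  choose c hc hcb using fun h : Fin H =>
    head_second_deriv X (headU θ h) (headU v h) (headW θ h) (headW v h) hR hX
  refine ⟨1 / Real.sqrt H * ∑ h, c h,
    (HasSecondDeriv.sum Finset.univ fun h _ => hc h).const_mul _, ?_⟩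
  have hv : ‖v‖ ^ 2 = ∑ h, ∑ p : HeadIx T d, v (h, p) ^ 2 := by
    rw [EuclideanSpace.real_norm_sq_eq, Fintype.sum_prod_type]
  have hsum : |∑ h, c h| ≤ beta3 R θ * ‖v‖ ^ 2 := by
    rw [hv, Finset.mul_sum]
    exact (Finset.abs_sum_le_sum_abs _ _).trans
      (Finset.sum_le_sum fun h _ => (hcb h).trans (head_bound_le_beta3 hR θ v h))
  rw [abs_mul, abs_of_nonneg (by positivity : 0 ≤ 1 / Real.sqrt H)]
  calc 1 / Real.sqrt H * |∑ h, c h| ≤ 1 / Real.sqrt H * (beta3 R θ * ‖v‖ ^ 2) := by gcongr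
    _ = _ := by ring

/-- Self-bounded weak convexity of the logistic empirical risk of
the multi-head attention model: under the bounded-data assumption, for every `θ̃`,
`λ_min(∇²L̂(θ̃)) ≥ −(β₃(θ̃)/√H) · L̂(θ̃)`. Since the Hessian is symmetric, the
minimum-eigenvalue bound is expressed through its quadratic form: for every
direction `v`, the second derivative of `s ↦ L̂(θ̃ + s v)` at `0` (which equals
`vᵀ ∇²L̂(θ̃) v`) is at least `−(β₃(θ̃)/√H) · L̂(θ̃) · ‖v‖²`. -/
theorem empirical_risk_weak_convexity {T d H n : ℕ} (hn : 0 < n)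
    (X : Fin n → Fin T → Fin d → ℝ) (y : Fin n → ℝ) (R : ℝ)
    (hdata : BoundedData X y R) :
    ∀ (θ v : Params T d H),
      -(beta3 R θ / Real.sqrt H) * empLoss X y θ * ‖v‖ ^ 2 ≤
        iteratedDeriv 2 (fun s : ℝ => empLoss X y (θ + s • v)) 0 := by
  intro θ v
  obtain ⟨hR, hy, hX⟩ := hdata
  have key : ∀ i, ∃ e, HasSecondDeriv
      (fun s : ℝ => Real.log (1 + Real.exp (-(y i * mhPhi (X i) (θ + s • v))))) e ∧
      -(beta3 R θ / Real.sqrt H * ‖v‖ ^ 2) *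
        Real.log (1 + Real.exp (-(y i * mhPhi (X i) θ))) ≤ e := by
    intro i
    obtain ⟨c, hc, hcb⟩ := mhPhi_second_deriv (X i) hR (hX i) θ v
    have habs : |y i * c| ≤ beta3 R θ / Real.sqrt H * ‖v‖ ^ 2 := by
      rcases hy i with h | h <;> simpa [h] using hcb
    simpa using logistic_second_deriv (hc.const_mul (y i)) habs
  choose e he heb using key
  have hL : HasSecondDeriv (fun s : ℝ => empLoss X y (θ + s • v)) (1 / (n : ℝ) * ∑ i, e i) :=
    (HasSecondDeriv.sum Finset.univ fun i _ => he i).const_mul _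
  rw [hL.iteratedDeriv_two]
  calc -(beta3 R θ / Real.sqrt H) * empLoss X y θ * ‖v‖ ^ 2
      = 1 / (n : ℝ) * ∑ i, -(beta3 R θ / Real.sqrt H * ‖v‖ ^ 2) *
          Real.log (1 + Real.exp (-(y i * mhPhi (X i) θ))) := by
        rw [empLoss, ← Finset.mul_sum]
        ring
    _ ≤ 1 / (n : ℝ) * ∑ i, e i := by
        gcongr with i
        exact heb i
end
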